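/- Let F be the multivalued map of [0,1] (with the usual metric) into itself defined by F(x) = {2x/3} for 0 ≤ x < 3/4, F(x) = {1/2} for 3/4 ≤ x < 1, and F(1) = {1/3, 3/4}. Then for no function β : [0,∞) → [0,1) is F a (2−β, β)-contraction, where (2−β)(t) = 2 − β(t); indeed, for x = 1 no point y ∈ F(1) satisfies both conditions (A) and (B) of an (α,β)-mapping with α = 2−β. -/

import Mathlib

/-!
The nearest point of `F 1` to `1` is `3/4`, at distance `1/4`. The other point `1/3` lies at
distance `2/3 = 8/3 · 1/4`, so condition (A) holds for it only if `α (2/3) ≥ 8/3`. The point `3/4`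
is moved by `F` to `1/2`, again over a distance `1/4`, so condition (B) holds for it only if
`β (1/4) ≥ 1`.
-/

section AlphaBetaStep

variable {X : Type*} [PseudoMetricSpace X] {α β : ℝ → ℝ} {F : X → Set X} {x y z : X} {c : ℝ}

/-- Conditions (A) and (B) of an `(α, β)`-mapping for the pair `x`, `y`, with `d_F(x)` encoded as
`Metric.infDist x (F x)`. The requirement `y ∈ F x` is kept separate. -/
def IsAlphaBetaStep (α β : ℝ → ℝ) (F : X → Set X) (x y : X) : Prop :=
  dist x y ≤ α (dist x y) * Metric.infDist x (F x) ∧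
    Metric.infDist y (F y) ≤ β (dist x y) * dist x y

namespace IsAlphaBetaStep

theorem dist_lt_mul_dist (h : IsAlphaBetaStep α β F x y) (hxy : 0 < dist x y)
    (hα : α (dist x y) < c) (hz : z ∈ F x) : dist x y < c * dist x z := by
  have hprod : 0 < α (dist x y) * Metric.infDist x (F x) := hxy.trans_le h.1
  have hc : 0 < c := (pos_of_mul_pos_left hprod Metric.infDist_nonneg).trans hα
  have hd : 0 < Metric.infDist x (F x) :=
    Metric.infDist_nonneg.lt_of_ne' (right_ne_zero_of_mul hprod.ne')
  calc
    dist x y ≤ α (dist x y) * Metric.infDist x (F x) := h.1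
    _ < c * Metric.infDist x (F x) := mul_lt_mul_of_pos_right hα hd
    _ ≤ c * dist x z := mul_le_mul_of_nonneg_left (Metric.infDist_le_dist_of_mem hz) hc.le

theorem infDist_lt_dist (h : IsAlphaBetaStep α β F x y) (hxy : 0 < dist x y)
    (hβ : β (dist x y) < 1) : Metric.infDist y (F y) < dist x y :=
  h.2.trans_lt (mul_lt_of_lt_one_left hxy hβ)

end IsAlphaBetaStep

end AlphaBetaStep

theorem example_not_two_minus_beta_contraction_general {F : ℝ → Set ℝ} {α β : ℝ → ℝ}
    (hF_one : F 1 = {1 / 3, 3 / 4}) (hF_three_quarters : F (3 / 4) = {1 / 2})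
    (hα : α (2 / 3) < 8 / 3) (hβ : β (1 / 4) < 1) :
    ¬ ∃ y ∈ F 1, IsAlphaBetaStep α β F 1 y := by
  have dist_one_third : dist (1 : ℝ) (1 / 3) = 2 / 3 := by norm_num [Real.dist_eq]
  have dist_one_three_quarters : dist (1 : ℝ) (3 / 4) = 1 / 4 := by norm_num [Real.dist_eq]
  have dist_three_quarters_half : dist (3 / 4 : ℝ) (1 / 2) = 1 / 4 := by norm_num [Real.dist_eq]
  rintro ⟨y, hy, hstep⟩
  rw [hF_one] at hy
  obtain rfl | rfl := hy
  · have hlt : dist (1 : ℝ) (1 / 3) < 8 / 3 * dist (1 : ℝ) (3 / 4) :=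
      hstep.dist_lt_mul_dist (by norm_num) (by rwa [dist_one_third]) (by simp [hF_one])
    rw [dist_one_third, dist_one_three_quarters] at hlt
    norm_num at hlt
  · have hlt : Metric.infDist (3 / 4) (F (3 / 4)) < dist (1 : ℝ) (3 / 4) :=
      hstep.infDist_lt_dist (by norm_num) (by rwa [dist_one_three_quarters])
    rw [hF_three_quarters, Metric.infDist_singleton, dist_three_quarters_half,
      dist_one_three_quarters] at hlt
    exact hlt.false

/-- **Example 1.7 (1).** The finite-valued mapping `F` of `[0,1]` into itself with
`F x = {2x/3}` for `0 ≤ x < 3/4`, `F x = {1/2}` for `3/4 ≤ x < 1` and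
`F 1 = {1/3, 3/4}` is not a `(2-β, β)`-contraction for any `β : [0,∞) → [0,1)`;
indeed, at `x = 1` no point `y ∈ F 1` satisfies both conditions (A) and (B) with
`α = 2 - β`. -/
theorem example_not_two_minus_beta_contraction
    (F : ℝ → Set ℝ)
    (hF₁ : ∀ x : ℝ, 0 ≤ x → x < 3 / 4 → F x = {2 * x / 3})
    (hF₂ : ∀ x : ℝ, 3 / 4 ≤ x → x < 1 → F x = {1 / 2})
    (hF₃ : F 1 = {1 / 3, 3 / 4}) :
    ∀ β : ℝ → ℝ, (∀ t, 0 ≤ t → β t ∈ Set.Ico (0 : ℝ) 1) →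
      -- no y ∈ F 1 satisfies both (A) and (B) with α = 2 - β
      (¬ ∃ y ∈ F 1,
        dist (1 : ℝ) y ≤ (2 - β (dist (1 : ℝ) y)) * Metric.infDist 1 (F 1) ∧
        Metric.infDist y (F y) ≤ β (dist (1 : ℝ) y) * dist (1 : ℝ) y) ∧
      -- hence F is not a (2-β, β)-contraction
      ¬ ((∀ x ∈ Set.Icc (0 : ℝ) 1, ∃ y ∈ F x,
            dist x y ≤ (2 - β (dist x y)) * Metric.infDist x (F x) ∧
            Metric.infDist y (F y) ≤ β (dist x y) * dist x y) ∧
          ∀ t > (0 : ℝ), (2 - β t) * β t < 1) := by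
  intro β hβ
  have no_step : ¬ ∃ y ∈ F 1, IsAlphaBetaStep (fun t ↦ 2 - β t) β F 1 y :=
    example_not_two_minus_beta_contraction_general hF₃ (hF₂ (3 / 4) le_rfl (by norm_num))
      (by linarith [(hβ (2 / 3) (by norm_num)).1]) (hβ (1 / 4) (by norm_num)).2
  exact ⟨no_step, fun h ↦ no_step (h.1 1 (by simp))⟩
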